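/- arXiv:2006.07138 — 2 statements merged into one kernel-verified Lean document; each statement's English description precedes it below -/
import Mathlib

section
/- Let n ≥ 1, M' ≥ 1 and s ∈ (0,1). There exists a constant C = C(n,s) > 0 such that for every t ∈ [s, 2s], every σ > 0, every λ ≥ 2, every K > 0, every measurable map u : ℝⁿ → ℝ^{M'} with |u(x)| ≤ K for almost every x, every x₀ ∈ ℝⁿ and every r ∈ (0,1], setting θ := t/s + σ/n (so θ > 1), one has ∫_{ℝⁿ∖B(x₀,r)} ∫_{ℝⁿ} |u(x)−u(y)|^{n/s}/|x−y|^{n+t·n/s} dx dy ≤ ∫_{ℝⁿ∖B(x₀, λ^{−1} r^{θ})} ∫_{ℝⁿ∖B(x₀, λ^{−1} r^{θ})} |u(x)−u(y)|^{n/s}/|x−y|^{n+t·n/s} dx dy + C · K^{n/s} · λ^{−n} · r^{σ}. -/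
open MeasureTheory
open scoped ENNReal

noncomputable section

/-- Euclidean space `ℝᵏ`. -/
abbrev Euc (k : ℕ) : Type _ := EuclideanSpace ℝ (Fin k)

/-- Kernel `|u(x)-u(y)|^{n/s} / |x-y|^{n+t·n/s}` in `[0,∞]`. -/
def ker (n M : ℕ) (s t : ℝ) (u : Euc n → Euc M) (x y : Euc n) : ℝ≥0∞ :=
  ENNReal.ofReal (‖u x - u y‖ ^ ((n : ℝ) / s) / ‖x - y‖ ^ ((n : ℝ) + t * ((n : ℝ) / s)))

/-!
If `ρ ≤ r / 2`, then a point `y ∈ B(x₀, ρ)` is at distance at least `‖x - x₀‖ / 2` from any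
`x ∉ B(x₀, r)`. The only part of the left-hand energy missing on the right, `y ∈ B(x₀, ρ)`, is
therefore at most a multiple of `K ^ p · |B(x₀, ρ)| · ∫_{‖x - x₀‖ ≥ r} ‖x - x₀‖ ^ (-(n + α)) dx`,
with `p = n / s`, `α = t p`. In polar coordinates this is of order `K ^ p · ρ ^ n · r ^ (-α)`, and
the radius `ρ = λ⁻¹ r ^ θ` is the one for which `ρ ^ n · r ^ (-α) = λ ^ (-n) · r ^ σ`.
-/

open Metric Set

local notation "dim" => Module.finrank ℝ

theorem setLIntegral_lintegral_le_add {X : Type*} [MeasurableSpace X] {μ : Measure X}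
    {k : X → X → ℝ≥0∞} {g : X → ℝ≥0∞} {S A : Set X} (hA : MeasurableSet A) (hSA : S ⊆ A)
    (hg : Measurable g) (hkg : ∀ᵐ x ∂μ.restrict S, ∫⁻ y in Aᶜ, k x y ∂μ ≤ g x) :
    ∫⁻ x in S, ∫⁻ y, k x y ∂μ ∂μ
      ≤ (∫⁻ x in A, ∫⁻ y in A, k x y ∂μ ∂μ) + ∫⁻ x in S, g x ∂μ :=
  calc ∫⁻ x in S, ∫⁻ y, k x y ∂μ ∂μ
      ≤ ∫⁻ x in S, ((∫⁻ y in A, k x y ∂μ) + g x) ∂μ := by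
        refine lintegral_mono_ae ?_
        filter_upwards [hkg] with x hx
        rw [← lintegral_add_compl (k x) hA]
        gcongr
    _ = (∫⁻ x in S, ∫⁻ y in A, k x y ∂μ ∂μ) + ∫⁻ x in S, g x ∂μ := lintegral_add_right _ hg
    _ ≤ _ := by gcongr

section RadialTail

theorem pow_sub_one_smul_indicator_rpow {d : ℕ} (hd : 1 ≤ d) {r : ℝ} (hr : 0 < r) (α y : ℝ) :
    y ^ (d - 1) • (Ici r).indicator (fun z : ℝ ↦ z ^ (-(d + α))) y
      = (Ici r).indicator (fun z : ℝ ↦ z ^ (-α - 1)) y := by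
  by_cases hy : y ∈ Ici r
  · have hy0 : 0 < y := hr.trans_le hy
    rw [indicator_of_mem hy, indicator_of_mem hy, smul_eq_mul, ← Real.rpow_natCast,
      ← Real.rpow_add hy0, Nat.cast_sub hd]
    congr 1
    push_cast
    ring
  · simp only [indicator_of_notMem hy, smul_zero]

theorem indicator_compl_ball_fun_norm {E G : Type*} [SeminormedAddCommGroup E] [Zero G]
    (f : ℝ → G) (r : ℝ) :
    (ball (0 : E) r)ᶜ.indicator (fun x ↦ f ‖x‖) = fun x ↦ (Ici r).indicator f ‖x‖ := by
  ext x
  simp [indicator]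

variable {E : Type*} [NormedAddCommGroup E] [NormedSpace ℝ E] [FiniteDimensional ℝ E]
  [Nontrivial E] [MeasurableSpace E] [BorelSpace E] (μ : Measure E) [μ.IsAddHaarMeasure] {r α : ℝ}

theorem integrableOn_norm_rpow_compl_ball (hr : 0 < r) (hα : 0 < α) :
    IntegrableOn (fun x : E ↦ ‖x‖ ^ (-(dim E + α))) (ball 0 r)ᶜ μ := by
  rw [← integrable_indicator_iff measurableSet_ball.compl,
    indicator_compl_ball_fun_norm (fun z ↦ z ^ (-(dim E + α))),
    integrable_fun_norm_addHaar]
  simp only [pow_sub_one_smul_indicator_rpow Module.finrank_pos hr]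
  refine (integrable_indicator_iff measurableSet_Ici).2 ?_ |>.integrableOn
  rw [integrableOn_Ici_iff_integrableOn_Ioi]
  exact integrableOn_Ioi_rpow_of_lt (by linarith) hr

theorem setIntegral_norm_rpow_compl_ball (hr : 0 < r) (hα : 0 < α) :
    ∫ x in (ball (0 : E) r)ᶜ, ‖x‖ ^ (-(dim E + α)) ∂μ
      = dim E * μ.real (ball 0 1) / α * r ^ (-α) := by
  have hIci : Ioi 0 ∩ Ici r = Ici r := inter_eq_right.2 fun y hy ↦ hr.trans_le hy
  rw [← integral_indicator measurableSet_ball.compl,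
    indicator_compl_ball_fun_norm (fun z ↦ z ^ (-(dim E + α))),
    integral_fun_norm_addHaar]
  simp only [pow_sub_one_smul_indicator_rpow Module.finrank_pos hr]
  rw [setIntegral_indicator measurableSet_Ici, hIci, integral_Ici_eq_integral_Ioi,
    integral_Ioi_rpow_of_lt (by linarith) hr, sub_add_cancel, neg_div_neg_eq, nsmul_eq_mul,
    smul_eq_mul]
  ring

theorem setLIntegral_norm_sub_rpow_compl_ball (x₀ : E) (hr : 0 < r) (hα : 0 < α) :
    ∫⁻ x in (ball x₀ r)ᶜ, ENNReal.ofReal (‖x - x₀‖ ^ (-(dim E + α))) ∂μ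
      = ENNReal.ofReal (dim E * μ.real (ball 0 1) / α * r ^ (-α)) := by
  have hpre : (· - x₀) ⁻¹' (ball (0 : E) r)ᶜ = (ball x₀ r)ᶜ := by
    ext x
    simp [dist_eq_norm]
  rw [← setIntegral_norm_rpow_compl_ball μ hr hα,
    ofReal_integral_eq_lintegral_ofReal (integrableOn_norm_rpow_compl_ball μ hr hα)
      (.of_forall fun x ↦ by positivity), ← hpre]
  exact (measurePreserving_sub_right μ x₀).setLIntegral_comp_preimage measurableSet_ball.compl
    (f := fun x ↦ ENNReal.ofReal (‖x‖ ^ (-(dim E + α)))) (by fun_prop)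

end RadialTail

section Gagliardo

variable {E F : Type*} [NormedAddCommGroup E] [SeminormedAddCommGroup F]

/-- The integrand `‖u x - u y‖ ^ p / ‖x - y‖ ^ a` of the Gagliardo energy of `u`. The exponent `a`
is kept free; the fractional Sobolev space `W^{t,p}` on an `n`-dimensional space corresponds to
`a = n + t p`. -/
def gagliardoKernel (p a : ℝ) (u : E → F) (x y : E) : ℝ≥0∞ :=
  ENNReal.ofReal (‖u x - u y‖ ^ p / ‖x - y‖ ^ a)

variable {p a K r ρ α : ℝ} {u : E → F} {x₀ : E}

theorem gagliardoKernel_le_of_norm_sub_le_half {x y : E} (hp : 0 ≤ p) (ha : 0 ≤ a)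
    (hux : ‖u x‖ ≤ K) (huy : ‖u y‖ ≤ K) (hx : 0 < ‖x - x₀‖)
    (hy : ‖y - x₀‖ ≤ ‖x - x₀‖ / 2) :
    gagliardoKernel p a u x y
      ≤ ENNReal.ofReal (2 ^ (p + a) * K ^ p * ‖x - x₀‖ ^ (-a)) := by
  have hK : 0 ≤ K := (norm_nonneg _).trans hux
  have hu : ‖u x - u y‖ ≤ 2 * K := by linarith [norm_sub_le (u x) (u y)]
  have hxy : ‖x - x₀‖ / 2 ≤ ‖x - y‖ := by linarith [norm_sub_le_norm_sub_add_norm_sub x y x₀]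
  refine ENNReal.ofReal_le_ofReal ?_
  calc ‖u x - u y‖ ^ p / ‖x - y‖ ^ a ≤ (2 * K) ^ p / (‖x - x₀‖ / 2) ^ a := by gcongr
    _ = 2 ^ (p + a) * K ^ p * ‖x - x₀‖ ^ (-a) := by
      rw [Real.mul_rpow zero_le_two hK, Real.div_rpow hx.le zero_le_two,
        Real.rpow_add zero_lt_two, Real.rpow_neg hx.le]
      field_simp

variable [MeasurableSpace E] [BorelSpace E] {μ : Measure E}

theorem setLIntegral_ball_gagliardoKernel_le {x : E} (hp : 0 ≤ p) (ha : 0 ≤ a)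
    (hu : ∀ᵐ y ∂μ, ‖u y‖ ≤ K) (hux : ‖u x‖ ≤ K) (hx : 0 < ‖x - x₀‖) (hρ : ρ ≤ ‖x - x₀‖ / 2) :
    ∫⁻ y in ball x₀ ρ, gagliardoKernel p a u x y ∂μ
      ≤ ENNReal.ofReal (2 ^ (p + a) * K ^ p * ‖x - x₀‖ ^ (-a)) * μ (ball x₀ ρ) := by
  rw [← setLIntegral_const]
  refine lintegral_mono_ae ?_
  filter_upwards [ae_restrict_mem measurableSet_ball, ae_restrict_of_ae hu] with y hy huy
  exact gagliardoKernel_le_of_norm_sub_le_half hp ha hux huy hx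
    ((mem_ball_iff_norm.1 hy).le.trans hρ)

variable [NormedSpace ℝ E] [FiniteDimensional ℝ E] [Nontrivial E] [μ.IsAddHaarMeasure]

theorem setLIntegral_gagliardoKernel_compl_ball_le (hp : 0 ≤ p) (hα : 0 < α) (hK : 0 ≤ K)
    (hu : ∀ᵐ x ∂μ, ‖u x‖ ≤ K) (hr : 0 < r) (hρ : 0 ≤ ρ) (hρr : ρ ≤ r / 2) :
    ∫⁻ x in (ball x₀ r)ᶜ, ∫⁻ y, gagliardoKernel p (dim E + α) u x y ∂μ ∂μ
      ≤ (∫⁻ x in (ball x₀ ρ)ᶜ, ∫⁻ y in (ball x₀ ρ)ᶜ, gagliardoKernel p (dim E + α) u x y ∂μ ∂μ)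
        + ENNReal.ofReal (2 ^ (p + (dim E + α)) * (dim E * μ.real (ball 0 1) ^ 2 / α) * K ^ p
            * (ρ ^ dim E * r ^ (-α))) := by
  set c : ℝ := 2 ^ (p + (dim E + α)) * K ^ p
  have hc : 0 ≤ c := by positivity
  have hvol : μ (ball x₀ ρ) = ENNReal.ofReal (ρ ^ dim E * μ.real (ball 0 1)) := by
    rw [Measure.addHaar_ball μ x₀ hρ, ENNReal.ofReal_mul (by positivity), ofReal_measureReal]
  have hinner : ∀ᵐ x ∂μ.restrict (ball x₀ r)ᶜ,
      ∫⁻ y in ((ball x₀ ρ)ᶜ)ᶜ, gagliardoKernel p (dim E + α) u x y ∂μ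
        ≤ ENNReal.ofReal (c * ‖x - x₀‖ ^ (-(dim E + α))) * μ (ball x₀ ρ) := by
    filter_upwards [ae_restrict_mem measurableSet_ball.compl, ae_restrict_of_ae hu] with x hx hux
    have hrx : r ≤ ‖x - x₀‖ := by simpa [dist_eq_norm] using hx
    rw [compl_compl]
    exact setLIntegral_ball_gagliardoKernel_le hp (by positivity) hu hux (hr.trans_le hrx)
      (by linarith)
  have houter : ∫⁻ x in (ball x₀ r)ᶜ,
      ENNReal.ofReal (c * ‖x - x₀‖ ^ (-(dim E + α))) * μ (ball x₀ ρ) ∂μ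
        = ENNReal.ofReal (c * (dim E * μ.real (ball 0 1) / α * r ^ (-α))
            * (ρ ^ dim E * μ.real (ball 0 1))) := by
    simp only [ENNReal.ofReal_mul hc]
    rw [lintegral_mul_const _ (by fun_prop), lintegral_const_mul _ (by fun_prop),
      setLIntegral_norm_sub_rpow_compl_ball μ x₀ hr hα, hvol, ← ENNReal.ofReal_mul hc,
      ← ENNReal.ofReal_mul (by positivity)]
  refine (setLIntegral_lintegral_le_add measurableSet_ball.compl
    (compl_subset_compl.2 (ball_subset_ball (by linarith))) (by fun_prop) hinner).trans_eq ?_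
  rw [houter]
  congr 2
  ring

end Gagliardo

section ShrunkRadius

variable {lam r : ℝ}

theorem inv_mul_rpow_le_half {θ : ℝ} (hlam : 2 ≤ lam) (hr : 0 < r) (hr1 : r ≤ 1) (hθ : 1 ≤ θ) :
    lam⁻¹ * r ^ θ ≤ r / 2 :=
  calc lam⁻¹ * r ^ θ ≤ 2⁻¹ * r := by
        gcongr
        exact Real.rpow_le_self_of_le_one hr.le hr1 hθ
    _ = r / 2 := by ring

theorem inv_mul_rpow_pow_mul_rpow_neg {n : ℕ} (hn : n ≠ 0) (hlam : 0 ≤ lam) (hr : 0 < r)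
    (s t σ : ℝ) :
    (lam⁻¹ * r ^ (t / s + σ / n)) ^ n * r ^ (-(t * (n / s))) = lam ^ (-(n : ℝ)) * r ^ σ := by
  have hexp : (t / s + σ / n) * n + -(t * (n / s)) = σ := by
    field_simp
    ring
  rw [mul_pow, inv_pow, Real.rpow_neg hlam, Real.rpow_natCast, mul_assoc,
    ← Real.rpow_mul_natCast hr.le, ← Real.rpow_add hr, hexp]

end ShrunkRadius

theorem stmt7_general {E F : Type*} [NormedAddCommGroup E] [NormedSpace ℝ E]
    [FiniteDimensional ℝ E] [MeasurableSpace E] [BorelSpace E] (μ : Measure E)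
    [μ.IsAddHaarMeasure] [SeminormedAddCommGroup F] {n : ℕ} (hdim : dim E = n) (hn : 1 ≤ n)
    {s t₀ t₁ : ℝ} (hs : 0 < s) (ht₀ : 0 < t₀) :
    ∃ C : ℝ, 0 < C ∧
      ∀ t : ℝ, t₀ ≤ t → t ≤ t₁ →
      ∀ σ : ℝ, 1 ≤ t / s + σ / n →
      ∀ lam : ℝ, 2 ≤ lam →
      ∀ K : ℝ, 0 ≤ K →
      ∀ u : E → F, (∀ᵐ x ∂μ, ‖u x‖ ≤ K) →
      ∀ (x₀ : E) (r : ℝ), 0 < r → r ≤ 1 →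
        (∫⁻ x in (ball x₀ r)ᶜ, ∫⁻ y, gagliardoKernel (n / s) (n + t * (n / s)) u x y ∂μ ∂μ)
          ≤ (∫⁻ x in (ball x₀ (lam⁻¹ * r ^ (t / s + σ / n)))ᶜ,
              ∫⁻ y in (ball x₀ (lam⁻¹ * r ^ (t / s + σ / n)))ᶜ,
                gagliardoKernel (n / s) (n + t * (n / s)) u x y ∂μ ∂μ)
            + ENNReal.ofReal (C * K ^ ((n : ℝ) / s) * lam ^ (-(n : ℝ)) * r ^ σ) := by
  subst hdim
  have : Nontrivial E := Module.nontrivial_of_finrank_pos hn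
  have hp : 0 < (dim E : ℝ) / s := by positivity
  have hV : 0 < μ.real (ball (0 : E) 1) :=
    ENNReal.toReal_pos (measure_ball_pos μ 0 one_pos).ne' measure_ball_lt_top.ne
  refine ⟨2 ^ (dim E / s + (dim E + t₁ * (dim E / s)))
    * (dim E * μ.real (ball (0 : E) 1) ^ 2 / (t₀ * (dim E / s))), by positivity, ?_⟩
  intro t ht₀t htt₁ σ hθ lam hlam K hK u hu x₀ r hr hr1
  have hlam0 : 0 < lam := by linarith
  have ht : 0 < t := ht₀.trans_le ht₀t
  refine (setLIntegral_gagliardoKernel_compl_ball_le hp.le (mul_pos ht hp) hK hu hr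
    (by positivity) (inv_mul_rpow_le_half hlam hr hr1 hθ)).trans ?_
  rw [inv_mul_rpow_pow_mul_rpow_neg (by omega) hlam0.le hr, mul_assoc (_ * K ^ _)]
  gcongr
  exact one_le_two

/-- the tail energy of the complement of a ball is controlled by the energy of
the complement of a much smaller ball, up to an explicit error term. -/
theorem stmt7 (n M : ℕ) (hn : 1 ≤ n) (hM : 1 ≤ M) (s : ℝ) (hs : 0 < s) (hs1 : s < 1) :
    ∃ C : ℝ, 0 < C ∧
      ∀ t : ℝ, s ≤ t → t ≤ 2 * s →
      ∀ σ : ℝ, 0 < σ →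
      ∀ lam : ℝ, 2 ≤ lam →
      ∀ K : ℝ, 0 < K →
      ∀ u : Euc n → Euc M, Measurable u → (∀ᵐ x, ‖u x‖ ≤ K) →
      ∀ (x₀ : Euc n) (r : ℝ), 0 < r → r ≤ 1 →
        (∫⁻ x in (Metric.ball x₀ r)ᶜ, ∫⁻ y, ker n M s t u x y)
          ≤ (∫⁻ x in (Metric.ball x₀ (lam⁻¹ * r ^ (t / s + σ / n)))ᶜ,
              ∫⁻ y in (Metric.ball x₀ (lam⁻¹ * r ^ (t / s + σ / n)))ᶜ, ker n M s t u x y)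
            + ENNReal.ofReal (C * K ^ ((n : ℝ) / s) * lam ^ (-(n : ℝ)) * r ^ σ) := by
  obtain ⟨C, hC, h⟩ := stmt7_general (F := Euc M) (t₁ := 2 * s) (volume : Measure (Euc n))
    finrank_euclideanSpace_fin hn hs hs
  exact ⟨C, hC, fun t hst ht σ hσ lam hlam K hK u _ ↦ h t hst ht σ
    (le_add_of_le_of_nonneg ((one_le_div hs).2 hst) (by positivity)) lam hlam K hK.le u⟩
end
end

section
/- Let n ≥ 1, m ≥ 1 and s ∈ (0,1). For every measurable map u : 𝕊ⁿ → 𝕊^m with [u]_{W^{s,n/s}(𝕊ⁿ)} < ∞ there exists ε = ε(u) > 0 with the following property: whenever g₁, g₂ : 𝕊ⁿ → 𝕊^m are continuous maps satisfying ∫_{𝕊ⁿ} |u − g_i| dμ + [u − g_i]_{W^{s,n/s}(𝕊ⁿ)} ≤ ε for i = 1, 2, the maps g₁ and g₂ are homotopic. -/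
open MeasureTheory
open scoped ENNReal

noncomputable section

/-- The unit sphere `𝕊ᵏ ⊆ ℝ^{k+1}`. -/
abbrev Sph (k : ℕ) : Type _ := ↥(Metric.sphere (0 : EuclideanSpace ℝ (Fin (k + 1))) 1)

/-- `f` and `g` are homotopic maps. -/
def Homotopic {X Y : Type*} [TopologicalSpace X] [TopologicalSpace Y] (f g : X → Y) : Prop :=
  ∃ H : unitInterval × X → Y, Continuous H ∧ (∀ x, H (0, x) = f x) ∧ (∀ x, H (1, x) = g x)

/-- The Gagliardo seminorm `[f]_{W^{σ,p}(𝕊ⁿ)}` of a map `f : 𝕊ⁿ → ℝ^{m+1}`, in `[0,∞]`;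
`μH[n]` is the `n`-dimensional Hausdorff measure on `𝕊ⁿ`. -/
def sphGagliardo (n m : ℕ) (σ p : ℝ) (f : Sph n → EuclideanSpace ℝ (Fin (m + 1))) : ℝ≥0∞ :=
  (∫⁻ x, ∫⁻ y, ENNReal.ofReal (‖f x - f y‖ ^ p / dist x y ^ ((n : ℝ) + σ * p))
      ∂(μH[(n : ℝ)] : Measure (Sph n)) ∂(μH[(n : ℝ)] : Measure (Sph n))) ^ (1 / p)

/-!
Average a unit-valued map `g` against a tent of width `t` around each point. Expanding
`‖∫ g‖²` as a double integral of `⟪g y, g z⟫ = 1 - ‖g y - g z‖² / 2` shows that the average is far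
from `0` wherever the Gagliardo energy of `g` at distances below `2 t` is small, and at the critical
exponent `s p = d` the required smallness does not depend on `t`. The energy of `u` near the
diagonal tends to `0`, so a single scale `t₀` below which the averages do not vanish serves every
`g` close to `u` in the seminorm. Letting `t` run from `0` to `t₀` deforms `g` to the direction of
its average at the fixed scale `t₀`, where closeness in `L¹` makes the averages of `g₁` and `g₂`
uniformly close.
-/

open Filter Metric Module Set
open scoped NNReal RealInnerProductSpace Topology

section Homotopy

variable {X Y Z : Type*} [TopologicalSpace X] [TopologicalSpace Y] [TopologicalSpace Z]

theorem homotopic_iff_exists_continuousMap {f g : X → Y} :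
    Homotopic f g ↔ ∃ F G : C(X, Y), ⇑F = f ∧ ⇑G = g ∧ F.Homotopic G := by
  constructor
  · rintro ⟨H, hH, hf, hg⟩
    have hf' : Continuous f := (hH.comp (Continuous.prodMk_right 0)).congr hf
    have hg' : Continuous g := (hH.comp (Continuous.prodMk_right 1)).congr hg
    exact ⟨⟨f, hf'⟩, ⟨g, hg'⟩, rfl, rfl, ⟨⟨⟨H, hH⟩, hf, hg⟩⟩⟩
  · rintro ⟨F, G, rfl, rfl, ⟨H⟩⟩
    exact ⟨H, H.continuous, H.apply_zero, H.apply_one⟩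

theorem Homotopic.symm {f g : X → Y} (h : Homotopic f g) : Homotopic g f := by
  obtain ⟨F, G, hF, hG, hFG⟩ := homotopic_iff_exists_continuousMap.1 h
  exact homotopic_iff_exists_continuousMap.2 ⟨G, F, hG, hF, hFG.symm⟩

theorem Homotopic.trans {f g h : X → Y} (hfg : Homotopic f g) (hgh : Homotopic g h) :
    Homotopic f h := by
  obtain ⟨F, G, rfl, rfl, hFG⟩ := homotopic_iff_exists_continuousMap.1 hfg
  obtain ⟨G', H, hG, rfl, hGH⟩ := homotopic_iff_exists_continuousMap.1 hgh
  obtain rfl := DFunLike.coe_injective hG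
  exact homotopic_iff_exists_continuousMap.2 ⟨F, H, rfl, rfl, hFG.trans hGH⟩

theorem Homotopic.continuous_comp {f g : X → Y} (h : Homotopic f g) {φ : Y → Z}
    (hφ : Continuous φ) : Homotopic (φ ∘ f) (φ ∘ g) := by
  obtain ⟨H, hH, hf, hg⟩ := h
  exact ⟨φ ∘ H, hφ.comp hH, fun x => congrArg φ (hf x), fun x => congrArg φ (hg x)⟩

variable {E : Type*} [NormedAddCommGroup E]

/-- The inclusion of the unit sphere of `E` into the punctured space `E ∖ {0}`, in which the
homotopies below are built. -/
def sphereToPunctured (x : sphere (0 : E) 1) : ({0}ᶜ : Set E) :=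
  ⟨x, ne_zero_of_mem_unit_sphere x⟩

theorem continuous_sphereToPunctured : Continuous (sphereToPunctured (E := E)) :=
  continuous_subtype_val.subtype_mk _

variable [NormedSpace ℝ E]

theorem homeomorphUnitSphereProd_sphereToPunctured (x : sphere (0 : E) 1) :
    (homeomorphUnitSphereProd E (sphereToPunctured x)).1 = x := by
  ext1
  simp [sphereToPunctured]

theorem homotopic_of_homotopic_sphereToPunctured_comp {f g : X → sphere (0 : E) 1}
    (h : Homotopic (sphereToPunctured ∘ f) (sphereToPunctured ∘ g)) : Homotopic f g := by
  have hretract := h.continuous_comp (continuous_fst.comp (homeomorphUnitSphereProd E).continuous)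
  simpa only [Function.comp_def, homeomorphUnitSphereProd_sphereToPunctured] using hretract

theorem homotopic_of_zero_notMem_segment {A B : X → ({0}ᶜ : Set E)} (hA : Continuous A)
    (hB : Continuous B) (h : ∀ x, (0 : E) ∉ segment ℝ (A x : E) (B x)) : Homotopic A B := by
  have hne (z : unitInterval × X) : AffineMap.lineMap (A z.2 : E) (B z.2) (z.1 : ℝ) ∈
      ({0}ᶜ : Set E) := fun h0 => h z.2 <| by
    rw [segment_eq_image_lineMap]
    exact ⟨z.1, z.1.2, h0⟩
  refine ⟨fun z => ⟨_, hne z⟩, Continuous.subtype_mk ?_ _, fun x => ?_, fun x => ?_⟩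
  · simp only [AffineMap.lineMap_apply_module]
    fun_prop
  · simp
  · simp

theorem zero_notMem_segment_of_norm_sub_lt {a b : E} (h : ‖b - a‖ < ‖a‖) :
    (0 : E) ∉ segment ℝ a b := fun h0 => by
  have hsub : segment ℝ a b ⊆ ball a ‖a‖ :=
    (convex_ball a _).segment_subset (mem_ball_self ((norm_nonneg _).trans_lt h))
      (mem_ball_iff_norm.2 h)
  simpa using hsub h0

theorem zero_notMem_segment_of_inner_pos {F : Type*} [NormedAddCommGroup F] [InnerProductSpace ℝ F]
    {a b : F} (h : 0 < ⟪a, b⟫) : (0 : F) ∉ segment ℝ a b := fun h0 => by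
  have ha : a ≠ 0 := fun ha => by simp [ha] at h
  have hsub : segment ℝ a b ⊆ {v | 0 < ⟪a, v⟫} :=
    (convex_halfSpace_gt (innerSL ℝ a).toLinearMap.isLinear 0).segment_subset
      (real_inner_self_pos.2 ha) h
  simpa using hsub h0

end Homotopy

section LowerRegular

/-- Lower Ahlfors `d`-regularity: balls of radius `r ≤ 1` have measure at least a constant times
`r ^ d`. -/
def IsLowerRegular {X : Type*} [PseudoMetricSpace X] [MeasurableSpace X] (μ : Measure X) (d : ℝ) :
    Prop :=
  ∃ c : ℝ, 0 < c ∧ ∀ x r, 0 < r → r ≤ 1 → ENNReal.ofReal (c * r ^ d) ≤ μ (ball x r)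

variable {E : Type*} [NormedAddCommGroup E] [InnerProductSpace ℝ E]

theorem exists_norm_eq_one_orthogonalProjectionOnto_eq {x : E} (hx : ‖x‖ = 1) (w : (ℝ ∙ x)ᗮ)
    (hw : ‖w‖ ≤ 1) :
    ∃ y : E, ‖y‖ = 1 ∧ ‖y - x‖ ≤ 2 * ‖w‖ ∧ (ℝ ∙ x)ᗮ.orthogonalProjectionOnto y = w := by
  set q : ℝ := √(1 - ‖w‖ ^ 2)
  have hq : q ^ 2 = 1 - ‖w‖ ^ 2 := Real.sq_sqrt (by nlinarith [norm_nonneg w])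
  have hq0 : 0 ≤ q := Real.sqrt_nonneg _
  have norm_sq (a : ℝ) : ‖(w : E) + a • x‖ ^ 2 = ‖w‖ ^ 2 + a ^ 2 := by
    have horth : ⟪(w : E), x⟫ = 0 := Submodule.mem_orthogonal_singleton_iff_inner_left.1 w.2
    rw [norm_add_sq_real, inner_smul_right, horth, norm_smul, hx, Real.norm_eq_abs, mul_one,
      sq_abs, Submodule.coe_norm]
    ring
  refine ⟨w + q • x, ?_, ?_, ?_⟩
  · rw [← sq_eq_sq₀ (norm_nonneg _) zero_le_one, norm_sq, hq]
    ring
  · have hsub : (w : E) + q • x - x = w + (q - 1) • x := by module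
    rw [hsub, ← sq_le_sq₀ (norm_nonneg _) (by positivity), norm_sq]
    nlinarith [norm_nonneg w]
  · rw [map_add, map_smul, Submodule.orthogonalProjectionOnto_mem_subspace_eq_self,
      Submodule.orthogonalProjectionOnto_orthogonalComplement_singleton_eq_zero, smul_zero,
      add_zero]

theorem exists_lipschitzWith_ball_subset_image_sphere {n : ℕ} [Fact (finrank ℝ E = n + 1)]
    (x : sphere (0 : E) 1) :
    ∃ T : sphere (0 : E) 1 → EuclideanSpace ℝ (Fin n), LipschitzWith 1 T ∧
      ∀ r ≤ 1, ball 0 (r / 2) ⊆ T '' ball x r := by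
  let b := (OrthonormalBasis.fromOrthogonalSpanSingleton (𝕜 := ℝ) n
    (ne_zero_of_mem_unit_sphere x)).repr
  refine ⟨fun y => b ((ℝ ∙ (x : E))ᗮ.orthogonalProjectionOnto y), ?_, fun r hr v hv => ?_⟩
  · simpa [Function.comp_def] using b.lipschitz.comp
      ((Submodule.lipschitzWith_orthogonalProjectionOnto _).comp (LipschitzWith.subtype_val _))
  · have hv' : ‖b.symm v‖ < r / 2 := by simpa using hv
    obtain ⟨y, hy, hyx, hproj⟩ := exists_norm_eq_one_orthogonalProjectionOnto_eq
      (norm_eq_of_mem_sphere x) (b.symm v) (by linarith)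
    refine ⟨⟨y, by simpa using hy⟩, ?_, by simp [hproj]⟩
    rw [mem_ball, Subtype.dist_eq, dist_eq_norm]
    exact hyx.trans_lt (by linarith)

theorem exists_lipschitzOnWith_stereoInvFun {v : E} (hv : ‖v‖ = 1) {s : Set (ℝ ∙ v)ᗮ}
    (hs : IsCompact s) : ∃ K, LipschitzOnWith K (stereoInvFun hv) s := by
  have hloc : LocallyLipschitz (fun w : (ℝ ∙ v)ᗮ => stereoInvFunAux v w) :=
    (contDiff_stereoInvFunAux.comp (ℝ ∙ v)ᗮ.subtypeL.contDiff).locallyLipschitz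
  obtain ⟨K, hK⟩ := hloc.locallyLipschitzOn.exists_lipschitzOnWith_of_compact hs
  exact ⟨K, fun a ha b hb => hK ha hb⟩

variable [MeasurableSpace E] [BorelSpace E] {n : ℕ}

theorem isLowerRegular_hausdorffMeasure_sphere (hE : finrank ℝ E = n + 1) :
    IsLowerRegular (μH[(n : ℝ)] : Measure (sphere (0 : E) 1)) n := by
  have : Fact (finrank ℝ E = n + 1) := ⟨hE⟩
  set ν : Measure (EuclideanSpace ℝ (Fin n)) := μH[(n : ℝ)]
  have : ν.IsAddHaarMeasure := by
    have h := isAddHaarMeasure_hausdorffMeasure (E := EuclideanSpace ℝ (Fin n))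
    rwa [finrank_euclideanSpace_fin] at h
  have hpos : 0 < ν.real (ball 0 (1 / 2)) :=
    ENNReal.toReal_pos (measure_ball_pos ν _ one_half_pos).ne' measure_ball_lt_top.ne
  refine ⟨_, hpos, fun x r hr hr1 => ?_⟩
  obtain ⟨T, hT, himage⟩ := exists_lipschitzWith_ball_subset_image_sphere (n := n) x
  calc ENNReal.ofReal (ν.real (ball 0 (1 / 2)) * r ^ (n : ℝ))
      = ν (ball 0 (r / 2)) := by
        have hr2 : r / 2 = r * (1 / 2) := by ring
        rw [hr2, Measure.addHaar_ball_mul_of_pos ν 0 hr, finrank_euclideanSpace_fin, mul_comm,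
          ENNReal.ofReal_mul (by positivity), Real.rpow_natCast, ofReal_measureReal]
    _ ≤ ν (T '' ball x r) := measure_mono (himage r hr1)
    _ ≤ μH[(n : ℝ)] (ball x r) := by
        simpa using hT.hausdorffMeasure_image_le n.cast_nonneg (ball x r)

theorem isFiniteMeasure_hausdorffMeasure_sphere (hE : finrank ℝ E = n + 1) :
    IsFiniteMeasure (μH[(n : ℝ)] : Measure (sphere (0 : E) 1)) := by
  have : Fact (finrank ℝ E = n + 1) := ⟨hE⟩
  have : FiniteDimensional ℝ E := .of_fact_finrank_eq_succ n
  refine ⟨isCompact_univ.measure_lt_top_of_nhdsWithin fun x _ => ?_⟩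
  have hx : ‖((-x : sphere (0 : E) 1) : E)‖ = 1 := norm_eq_of_mem_sphere (-x)
  set U := (ℝ ∙ ((-x : sphere (0 : E) 1) : E))ᗮ
  have : (μH[(n : ℝ)] : Measure U).IsAddHaarMeasure := by
    have h := isAddHaarMeasure_hausdorffMeasure (E := U)
    rwa [Submodule.finrank_orthogonal_span_singleton (n := n)
      (ne_zero_of_mem_unit_sphere (-x))] at h
  have hcompact : IsCompact (closedBall (0 : U) 1) := isCompact_closedBall _ _
  obtain ⟨K, hK⟩ := exists_lipschitzOnWith_stereoInvFun hx hcompact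
  rw [nhdsWithin_univ]
  refine ⟨stereoInvFun hx '' closedBall 0 1, ?_, ?_⟩
  · have hx0 : (stereographic hx).symm 0 = x := by
      rw [← stereographic_neg_apply x]
      refine (stereographic hx).left_inv ?_
      rw [stereographic_source]
      exact ne_neg_of_mem_unit_sphere ℝ x
    have hnhds := (stereographic hx).symm.image_mem_nhds (mem_univ (0 : U))
      (closedBall_mem_nhds 0 one_pos)
    rwa [hx0] at hnhds
  · refine (hK.hausdorffMeasure_image_le n.cast_nonneg).trans_lt ?_
    exact ENNReal.mul_lt_top (by simp) hcompact.measure_lt_top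

end LowerRegular

section UnitVectors

variable {E : Type*} [NormedAddCommGroup E]

theorem sq_le_one_add_four_mul_rpow {r p : ℝ} (hr : 0 ≤ r) (hr2 : r ≤ 2) (hp : 0 ≤ p) :
    r ^ 2 ≤ 1 + 4 * r ^ p := by
  rcases le_total r 1 with h1 | h1
  · nlinarith [Real.rpow_nonneg hr p]
  · nlinarith [Real.one_le_rpow h1 hp]

variable {Ω : Type*} [MeasurableSpace Ω] {ν : Measure Ω} {g : Ω → E}

theorem integrable_norm_sub_rpow_prod [IsFiniteMeasure ν] (hg : AEStronglyMeasurable g ν)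
    (hg1 : ∀ x, ‖g x‖ = 1) {p : ℝ} (hp : 0 ≤ p) :
    Integrable (fun z : Ω × Ω => ‖g z.1 - g z.2‖ ^ p) (ν.prod ν) := by
  refine .of_bound ?_ (2 ^ p) (.of_forall fun z => ?_)
  · exact ((hg.comp_fst.sub hg.comp_snd).norm.aemeasurable.pow_const p).aestronglyMeasurable
  · rw [Real.norm_of_nonneg (by positivity)]
    have h := norm_sub_le (g z.1) (g z.2)
    rw [hg1, hg1] at h
    exact Real.rpow_le_rpow (norm_nonneg _) (h.trans_eq one_add_one_eq_two) hp

variable [InnerProductSpace ℝ E]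

theorem real_inner_eq_one_sub_sq_norm_sub_div_two {a b : E} (ha : ‖a‖ = 1) (hb : ‖b‖ = 1) :
    ⟪a, b⟫ = 1 - ‖a - b‖ ^ 2 / 2 := by
  rw [norm_sub_sq_real, ha, hb]
  ring

variable [CompleteSpace E]

theorem sq_norm_integral_eq_integral_inner [SFinite ν] (hg : Integrable g ν) :
    ‖∫ x, g x ∂ν‖ ^ 2 = ∫ z, ⟪g z.1, g z.2⟫ ∂ν.prod ν := by
  rw [← real_inner_self_eq_norm_sq]
  exact (integral_prod_bilin (innerSL ℝ) hg hg).symm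

theorem sq_measureReal_univ_le_sq_norm_integral_add [IsFiniteMeasure ν]
    (hg : AEStronglyMeasurable g ν) (hg1 : ∀ x, ‖g x‖ = 1) {p : ℝ} (hp : 0 ≤ p) :
    ν.real univ ^ 2 / 2 ≤ ‖∫ x, g x ∂ν‖ ^ 2 + 2 * ∫ z, ‖g z.1 - g z.2‖ ^ p ∂ν.prod ν := by
  have hgint : Integrable g ν := .of_bound hg 1 (.of_forall fun x => (hg1 x).le)
  have hpow := (integrable_norm_sub_rpow_prod hg hg1 hp).const_mul 2
  have hinner : Integrable (fun z : Ω × Ω => ⟪g z.1, g z.2⟫) (ν.prod ν) :=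
    .of_bound (hg.comp_fst.inner hg.comp_snd) 1 (.of_forall fun z => by
      simpa only [hg1, mul_one] using norm_inner_le_norm (𝕜 := ℝ) (g z.1) (g z.2))
  have hpointwise (z : Ω × Ω) : 1 / 2 ≤ ⟪g z.1, g z.2⟫ + 2 * ‖g z.1 - g z.2‖ ^ p := by
    have h2 : ‖g z.1 - g z.2‖ ≤ 2 := by linarith [norm_sub_le (g z.1) (g z.2), hg1 z.1, hg1 z.2]
    rw [real_inner_eq_one_sub_sq_norm_sub_div_two (hg1 _) (hg1 _)]
    linarith [sq_le_one_add_four_mul_rpow (norm_nonneg _) h2 hp]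
  calc ν.real univ ^ 2 / 2
      = ∫ _, 1 / 2 ∂ν.prod ν := by
        rw [integral_const, ← univ_prod_univ, measureReal_prod_prod, smul_eq_mul]
        ring
    _ ≤ ∫ z, (⟪g z.1, g z.2⟫ + 2 * ‖g z.1 - g z.2‖ ^ p) ∂ν.prod ν :=
        integral_mono (integrable_const _) (hinner.add hpow) hpointwise
    _ = ‖∫ x, g x ∂ν‖ ^ 2 + 2 * ∫ z, ‖g z.1 - g z.2‖ ^ p ∂ν.prod ν := by
        rw [integral_add hinner hpow, integral_const_mul, sq_norm_integral_eq_integral_inner hgint]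

theorem half_measureReal_univ_le_norm_integral [IsFiniteMeasure ν]
    (hg : AEStronglyMeasurable g ν) (hg1 : ∀ x, ‖g x‖ = 1) {p : ℝ} (hp : 0 ≤ p)
    (h : ∫⁻ z, ENNReal.ofReal (‖g z.1 - g z.2‖ ^ p) ∂ν.prod ν ≤
      ENNReal.ofReal (ν.real univ ^ 2 / 8)) :
    ν.real univ / 2 ≤ ‖∫ x, g x ∂ν‖ := by
  rw [← ofReal_integral_eq_lintegral_ofReal (integrable_norm_sub_rpow_prod hg hg1 hp)
    (.of_forall fun z => by positivity), ENNReal.ofReal_le_ofReal_iff (by positivity)] at h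
  have hsq := sq_measureReal_univ_le_sq_norm_integral_add hg hg1 hp
  exact le_of_sq_le_sq (by linarith) (norm_nonneg _)

end UnitVectors

section TentMeasure

variable {X : Type*} [PseudoMetricSpace X]

/-- The tent function of width `t` centred at `x`, used as a continuous cut-off to `ball x t`. -/
def tent (t : ℝ) (x y : X) : ℝ≥0 :=
  (1 - dist x y / t).toNNReal

theorem continuous_tent (t : ℝ) (x : X) : Continuous (tent t x) :=
  continuous_real_toNNReal.comp (by fun_prop)

theorem tent_le_one {t : ℝ} (ht : 0 ≤ t) (x y : X) : tent t x y ≤ 1 :=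
  Real.toNNReal_le_one.2 (sub_le_self 1 (by positivity))

theorem tent_le_indicator_ball {t : ℝ} (ht : 0 < t) (x y : X) :
    (tent t x y : ℝ≥0∞) ≤ (ball x t).indicator 1 y := by
  by_cases hy : y ∈ ball x t
  · simpa [hy] using tent_le_one ht.le x y
  · have hxy : t ≤ dist x y := by simpa [dist_comm] using hy
    simpa [hy, tent, Real.toNNReal_eq_zero] using (one_le_div₀ ht).2 hxy

theorem half_indicator_ball_le_tent {t : ℝ} (ht : 0 < t) (x y : X) :
    (ball x (t / 2)).indicator (fun _ => 2⁻¹) y ≤ (tent t x y : ℝ≥0∞) := by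
  by_cases hy : y ∈ ball x (t / 2)
  · have hxy : dist x y / t ≤ 1 / 2 := by
      rw [div_le_iff₀ ht, dist_comm]
      linarith [mem_ball.1 hy]
    have htent : (2⁻¹ : ℝ≥0) ≤ tent t x y :=
      NNReal.le_toNNReal_of_coe_le (by push_cast; linarith)
    rw [indicator_of_mem hy, ← ENNReal.coe_inv_two]
    exact ENNReal.coe_le_coe.2 htent
  · simp [hy]

variable [MeasurableSpace X]

/-- The measure `μ` localised at scale `t` around `x` by the tent function. Its total mass is not
normalised: only the directions of the integrals against it matter. -/
def tentMeasure (μ : Measure X) (t : ℝ) (x : X) : Measure X :=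
  μ.withDensity fun y => tent t x y

variable {μ : Measure X} {t : ℝ}

section

variable [OpensMeasurableSpace X]

theorem tentMeasure_le_restrict_ball (ht : 0 < t) (x : X) :
    tentMeasure μ t x ≤ μ.restrict (ball x t) := by
  rw [← withDensity_indicator_one measurableSet_ball]
  exact withDensity_mono (.of_forall (tent_le_indicator_ball ht x))

theorem tentMeasure_le (ht : 0 < t) (x : X) : tentMeasure μ t x ≤ μ :=
  (tentMeasure_le_restrict_ball ht x).trans Measure.restrict_le_self

theorem ae_tentMeasure_mem_ball (ht : 0 < t) (x : X) : ∀ᵐ y ∂tentMeasure μ t x, y ∈ ball x t :=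
  ae_mono (tentMeasure_le_restrict_ball ht x) (ae_restrict_mem measurableSet_ball)

theorem half_measure_ball_le_tentMeasure_univ (ht : 0 < t) (x : X) :
    2⁻¹ * μ (ball x (t / 2)) ≤ tentMeasure μ t x univ := by
  rw [← setLIntegral_const, ← lintegral_indicator measurableSet_ball, tentMeasure,
    withDensity_apply _ .univ, Measure.restrict_univ]
  exact lintegral_mono (half_indicator_ball_le_tent ht x)

theorem isFiniteMeasure_tentMeasure [IsFiniteMeasure μ] (ht : 0 < t) (x : X) :
    IsFiniteMeasure (tentMeasure μ t x) :=
  isFiniteMeasure_of_le μ (tentMeasure_le ht x)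

theorem IsLowerRegular.exists_le_tentMeasure_real_univ [IsFiniteMeasure μ] {d : ℝ}
    (hμ : IsLowerRegular μ d) :
    ∃ c, 0 < c ∧ ∀ t ∈ Ioc (0 : ℝ) 1, ∀ x, c * t ^ d ≤ (tentMeasure μ t x).real univ := by
  obtain ⟨c, hc, hball⟩ := hμ
  refine ⟨2⁻¹ * (c * 2⁻¹ ^ d), by positivity, fun t ⟨ht, ht1⟩ x => ?_⟩
  have := isFiniteMeasure_tentMeasure (μ := μ) ht x
  refine (ENNReal.ofReal_le_iff_le_toReal (measure_ne_top _ _)).1 ?_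
  calc ENNReal.ofReal (2⁻¹ * (c * 2⁻¹ ^ d) * t ^ d)
      = 2⁻¹ * ENNReal.ofReal (c * (t / 2) ^ d) := by
        rw [div_eq_inv_mul, Real.mul_rpow (by norm_num) ht.le, ← mul_assoc c, mul_assoc 2⁻¹,
          ENNReal.ofReal_mul (by norm_num), ENNReal.ofReal_inv_of_pos two_pos,
          ENNReal.ofReal_ofNat]
    _ ≤ 2⁻¹ * μ (ball x (t / 2)) := by gcongr; exact hball x _ (half_pos ht) (by linarith)
    _ ≤ tentMeasure μ t x univ := half_measure_ball_le_tentMeasure_univ ht x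

end

variable {E : Type*} [NormedAddCommGroup E] [NormedSpace ℝ E]

/-- The integral of `g` against the tent measure of width `t` at `x`, a positive multiple of the
average of `g` around `x` at scale `t`. -/
def tentIntegral (μ : Measure X) (g : X → E) (t : ℝ) (x : X) : E :=
  ∫ y, g y ∂tentMeasure μ t x

variable [OpensMeasurableSpace X]

theorem continuous_tentIntegral_comp {Z : Type*} [TopologicalSpace Z] [FirstCountableTopology Z]
    {g : X → E} (hg : Integrable g μ) {τ : Z → ℝ} {ξ : Z → X} (hτ : Continuous τ)
    (hξ : Continuous ξ) (hτ0 : ∀ z, 0 < τ z) :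
    Continuous fun z => tentIntegral μ g (τ z) (ξ z) := by
  have htent (t : ℝ) (x : X) : Measurable (tent t x) := (continuous_tent t x).measurable
  simp only [tentIntegral, tentMeasure, integral_withDensity_eq_integral_smul (htent _ _)]
  refine continuous_of_dominated (fun z => ?_) (fun z => .of_forall fun y => ?_) hg.norm
    (.of_forall fun y => ?_)
  · exact (htent _ _).aestronglyMeasurable.smul hg.aestronglyMeasurable
  · rw [NNReal.smul_def, norm_smul, Real.norm_of_nonneg (NNReal.coe_nonneg _)]
    exact mul_le_of_le_one_left (norm_nonneg _) (tent_le_one (hτ0 z).le _ _)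
  · have hdiv : Continuous fun z => dist (ξ z) y / τ z :=
      (hξ.dist continuous_const).div hτ fun z => (hτ0 z).ne'
    exact (continuous_real_toNNReal.comp (continuous_const.sub hdiv)).smul continuous_const

theorem enorm_tentIntegral_sub_le {g h : X → E} (hg : Integrable g μ) (hh : Integrable h μ)
    (ht : 0 < t) (x : X) :
    ‖tentIntegral μ g t x - tentIntegral μ h t x‖ₑ ≤ ∫⁻ y, ‖g y - h y‖ₑ ∂μ := by
  have hle : tentMeasure μ t x ≤ μ := tentMeasure_le ht x
  rw [tentIntegral, tentIntegral, ← integral_sub (hg.mono_measure hle) (hh.mono_measure hle)]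
  exact (enorm_integral_le_lintegral_enorm _).trans (lintegral_mono' hle le_rfl)

end TentMeasure

section GagliardoEnergy

variable {X : Type*} [MetricSpace X] [MeasurableSpace X]
variable {E : Type*} [NormedAddCommGroup E]

/-- The Gagliardo energy density `‖f x - f y‖ ^ p / dist x y ^ q` of `f` as a measure on `X × X`,
so that energies of regions of the product can be compared. The density is `0` on the diagonal as
soon as `p ≠ 0`. -/
def gagliardoMeasure (μ : Measure X) (p q : ℝ) (f : X → E) : Measure (X × X) :=
  (μ.prod μ).withDensity fun z =>
    ENNReal.ofReal (‖f z.1 - f z.2‖ ^ p / dist z.1 z.2 ^ q)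

/-- The Gagliardo seminorm `[f]_{W^{σ,p}}` of a map on a metric measure space `(X, μ)` of
dimension `d`; for `X = 𝕊ⁿ` and `d = n` it is `sphGagliardo`. -/
def gagliardoSeminorm (μ : Measure X) (d σ p : ℝ) (f : X → E) : ℝ≥0∞ :=
  (∫⁻ x, ∫⁻ y, ENNReal.ofReal (‖f x - f y‖ ^ p / dist x y ^ (d + σ * p)) ∂μ ∂μ) ^ (1 / p)

variable [SecondCountableTopology X] [OpensMeasurableSpace X] {μ : Measure X} {p q : ℝ}
  {f h : X → E}

theorem measurableSet_dist_lt (r : ℝ) : MeasurableSet {z : X × X | dist z.1 z.2 < r} :=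
  measurableSet_lt measurable_dist measurable_const

theorem measurable_gagliardoDensity (hf : StronglyMeasurable f) (p q : ℝ) :
    Measurable fun z : X × X => ENNReal.ofReal (‖f z.1 - f z.2‖ ^ p / dist z.1 z.2 ^ q) := by
  have hdiff : Measurable fun z : X × X => ‖f z.1 - f z.2‖ :=
    ((hf.comp_measurable measurable_fst).sub (hf.comp_measurable measurable_snd)).norm.measurable
  exact ((hdiff.pow_const p).div (measurable_dist.pow_const q)).ennreal_ofReal

theorem gagliardoSeminorm_eq_gagliardoMeasure_univ_rpow [SFinite μ] (hf : StronglyMeasurable f)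
    (d σ : ℝ) :
    gagliardoSeminorm μ d σ p f = gagliardoMeasure μ p (d + σ * p) f univ ^ (1 / p) := by
  rw [gagliardoMeasure, withDensity_apply _ .univ, Measure.restrict_univ,
    lintegral_prod _ (measurable_gagliardoDensity hf _ _).aemeasurable, gagliardoSeminorm]

theorem gagliardoMeasure_univ_le_of_gagliardoSeminorm_le [SFinite μ] (hf : StronglyMeasurable f)
    {d σ κ : ℝ} (hp : 0 < p) (hκ : 0 < κ)
    (h : gagliardoSeminorm μ d σ p f ≤ ENNReal.ofReal (κ ^ (1 / p))) :
    gagliardoMeasure μ p (d + σ * p) f univ ≤ ENNReal.ofReal κ := by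
  rw [gagliardoSeminorm_eq_gagliardoMeasure_univ_rpow hf, ← ENNReal.ofReal_rpow_of_pos hκ] at h
  exact (ENNReal.rpow_le_rpow_iff (one_div_pos.2 hp)).1 h

theorem gagliardoMeasure_univ_ne_top_of_gagliardoSeminorm_lt_top [SFinite μ]
    (hf : StronglyMeasurable f) {d σ : ℝ} (hp : 0 < p) (h : gagliardoSeminorm μ d σ p f < ⊤) :
    gagliardoMeasure μ p (d + σ * p) f univ ≠ ⊤ := by
  rw [gagliardoSeminorm_eq_gagliardoMeasure_univ_rpow hf] at h
  exact ((ENNReal.rpow_lt_top_iff_of_pos (one_div_pos.2 hp)).1 h).ne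

theorem gagliardoMeasure_sub_le (hf : StronglyMeasurable f) (hh : StronglyMeasurable h)
    (hp : 0 ≤ p) :
    gagliardoMeasure μ p q (fun x => f x - h x) ≤
      (2 : ℝ≥0∞) ^ p • (gagliardoMeasure μ p q f + gagliardoMeasure μ p q h) := by
  have hf' := measurable_gagliardoDensity hf p q
  have hh' := measurable_gagliardoDensity hh p q
  rw [gagliardoMeasure, gagliardoMeasure, gagliardoMeasure, ← withDensity_add_left hf',
    ← withDensity_smul _ (hf'.add hh')]
  refine withDensity_mono (.of_forall fun z => ?_)
  have hnorm : ENNReal.ofReal ‖f z.1 - h z.1 - (f z.2 - h z.2)‖ ≤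
      ENNReal.ofReal ‖f z.1 - f z.2‖ + ENNReal.ofReal ‖h z.1 - h z.2‖ := by
    rw [← ENNReal.ofReal_add (norm_nonneg _) (norm_nonneg _), sub_sub_sub_comm]
    exact ENNReal.ofReal_le_ofReal (norm_sub_le _ _)
  simp only [Pi.smul_apply, Pi.add_apply, smul_eq_mul, div_eq_mul_inv,
    ENNReal.ofReal_mul (Real.rpow_nonneg (norm_nonneg _) p),
    ← ENNReal.ofReal_rpow_of_nonneg (norm_nonneg _) hp, ← add_mul, ← mul_assoc]
  gcongr
  exact (ENNReal.rpow_le_rpow hnorm hp).trans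
    (ENNReal.add_rpow_le_two_rpow_mul_rpow_add_rpow _ _ hp)

theorem tendsto_gagliardoMeasure_dist_lt (hp : p ≠ 0) (hf : gagliardoMeasure μ p q f univ ≠ ⊤) :
    Tendsto (fun r => gagliardoMeasure μ p q f {z | dist z.1 z.2 < r}) (𝓝[>] 0) (𝓝 0) := by
  have hInter : ⋂ r > (0 : ℝ), {z : X × X | dist z.1 z.2 < r} = {z | dist z.1 z.2 ≤ 0} := by
    ext z
    simp only [mem_iInter]
    exact ⟨le_of_forall_gt, fun hz r hr => lt_of_le_of_lt hz hr⟩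
  have hmeas : MeasurableSet {z : X × X | dist z.1 z.2 ≤ 0} :=
    measurableSet_le measurable_dist measurable_const
  have hdiag : gagliardoMeasure μ p q f (⋂ r > 0, {z | dist z.1 z.2 < r}) = 0 := by
    rw [hInter, gagliardoMeasure, withDensity_apply _ hmeas]
    refine setLIntegral_eq_zero hmeas fun z hz => ?_
    simp [dist_le_zero.1 hz, hp]
  rw [← hdiag]
  exact tendsto_measure_biInter_gt (fun r _ => (measurableSet_dist_lt r).nullMeasurableSet)
    (fun r r' _ hr z hz => lt_of_lt_of_le hz hr)
    ⟨1, one_pos, measure_ne_top_of_subset (subset_univ _) hf⟩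

theorem lintegral_tentMeasure_prod_le [SFinite μ] (hp : p ≠ 0) (hq : 0 ≤ q) {t : ℝ}
    (ht : 0 < t) (x : X) :
    ∫⁻ z, ENNReal.ofReal (‖f z.1 - f z.2‖ ^ p)
        ∂(tentMeasure μ t x).prod (tentMeasure μ t x) ≤
      ENNReal.ofReal ((2 * t) ^ q) * gagliardoMeasure μ p q f {z | dist z.1 z.2 < 2 * t} := by
  have hmeas := measurableSet_dist_lt (X := X) (2 * t)
  have hle : (tentMeasure μ t x).prod (tentMeasure μ t x) ≤
      (μ.prod μ).restrict {z | dist z.1 z.2 < 2 * t} := by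
    refine (Measure.prod_mono (tentMeasure_le_restrict_ball ht x)
      (tentMeasure_le_restrict_ball ht x)).trans ?_
    rw [Measure.prod_restrict]
    refine Measure.restrict_mono (fun z hz => ?_) le_rfl
    have htri := dist_triangle_right z.1 z.2 x
    exact htri.trans_lt (by linarith [mem_ball.1 hz.1, mem_ball.1 hz.2])
  refine (lintegral_mono' hle le_rfl).trans ?_
  rw [gagliardoMeasure, withDensity_apply _ hmeas, ← lintegral_const_mul' _ _ ENNReal.ofReal_ne_top]
  refine setLIntegral_mono' hmeas fun z hz => ?_
  rw [← ENNReal.ofReal_mul (by positivity)]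
  refine ENNReal.ofReal_le_ofReal ?_
  rcases eq_or_ne z.1 z.2 with heq | hne
  · simp [heq, Real.zero_rpow hp]
  · have hdist : 0 < dist z.1 z.2 := dist_pos.2 hne
    rw [mul_div_assoc', le_div_iff₀ (by positivity), mul_comm]
    gcongr
    exact le_of_lt hz

end GagliardoEnergy

section ScaleBound

variable {X : Type*} [MetricSpace X] [SecondCountableTopology X] [MeasurableSpace X]
  [OpensMeasurableSpace X] {μ : Measure X} [IsFiniteMeasure μ]
variable {E : Type*} [NormedAddCommGroup E] [InnerProductSpace ℝ E] [CompleteSpace E]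

/- At the critical exponent `q = d + d` the factor `(2 t) ^ q` of `lintegral_tentMeasure_prod_le`
scales like the square of the mass, so `t` drops out of the smallness condition. -/
theorem half_tentMeasure_univ_le_norm_tentIntegral {g : X → E} (hg : StronglyMeasurable g)
    (hg1 : ∀ x, ‖g x‖ = 1) {c d p t : ℝ} (hc : 0 ≤ c) (hd : 0 ≤ d) (hp : 0 < p) (ht : 0 < t)
    {x : X} (hmass : c * t ^ d ≤ (tentMeasure μ t x).real univ)
    (henergy : gagliardoMeasure μ p (d + d) g {z | dist z.1 z.2 < 2 * t} ≤
      ENNReal.ofReal (c ^ 2 / (8 * (2 ^ d) ^ 2))) :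
    (tentMeasure μ t x).real univ / 2 ≤ ‖tentIntegral μ g t x‖ := by
  have := isFiniteMeasure_tentMeasure (μ := μ) ht x
  refine half_measureReal_univ_le_norm_integral hg.aestronglyMeasurable hg1 hp.le ?_
  calc ∫⁻ z, ENNReal.ofReal (‖g z.1 - g z.2‖ ^ p) ∂(tentMeasure μ t x).prod (tentMeasure μ t x)
      ≤ ENNReal.ofReal ((2 * t) ^ (d + d)) * ENNReal.ofReal (c ^ 2 / (8 * (2 ^ d) ^ 2)) :=
        (lintegral_tentMeasure_prod_le hp.ne' (by positivity) ht x).trans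
          (mul_le_mul_right henergy _)
    _ = ENNReal.ofReal ((c * t ^ d) ^ 2 / 8) := by
        rw [← ENNReal.ofReal_mul (by positivity), Real.rpow_add (by positivity),
          Real.mul_rpow zero_le_two ht.le]
        field_simp
    _ ≤ ENNReal.ofReal ((tentMeasure μ t x).real univ ^ 2 / 8) := by gcongr

theorem exists_forall_mul_rpow_le_norm_tentIntegral {d p : ℝ} (hd : 0 ≤ d) (hp : 0 < p)
    (hμ : IsLowerRegular μ d) {u : X → E} (hu : StronglyMeasurable u)
    (huE : gagliardoMeasure μ p (d + d) u univ ≠ ⊤) :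
    ∃ t₀ ∈ Ioc (0 : ℝ) 1, ∃ c > 0, ∃ κ > 0, ∀ g : X → E, StronglyMeasurable g →
      (∀ x, ‖g x‖ = 1) →
      gagliardoMeasure μ p (d + d) (fun x => u x - g x) univ ≤ ENNReal.ofReal κ →
      ∀ t ∈ Ioc 0 t₀, ∀ x, c * t ^ d ≤ ‖tentIntegral μ g t x‖ := by
  obtain ⟨c, hc, hmass⟩ := hμ.exists_le_tentMeasure_real_univ
  set K : ℝ := c ^ 2 / (8 * (2 ^ d) ^ 2)
  set κ : ℝ := K / (2 ^ p * 2)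
  have hκ : 0 < κ := by positivity
  have hsmall := (tendsto_gagliardoMeasure_dist_lt hp.ne' huE).eventually_le_const
    (ENNReal.ofReal_pos.2 hκ)
  obtain ⟨δ, hδE, hδ : 0 < δ⟩ := (hsmall.and self_mem_nhdsWithin).exists
  refine ⟨min (δ / 2) 1, ⟨by positivity, min_le_right _ _⟩, c / 2, half_pos hc, κ, hκ,
    fun g hg hg1 hgE t ht x => ?_⟩
  have ht1 : c * t ^ d ≤ (tentMeasure μ t x).real univ :=
    hmass t ⟨ht.1, ht.2.trans (min_le_right _ _)⟩ x
  have htδ : 2 * t ≤ δ := by linarith [ht.2.trans (min_le_left _ _)]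
  refine le_trans (by linarith) (half_tentMeasure_univ_le_norm_tentIntegral (p := p) hg hg1 hc.le
    hd hp ht.1 ht1 ?_)
  have hsub := gagliardoMeasure_sub_le (μ := μ) (q := d + d) hu (hu.sub hg) hp.le
  simp only [Pi.sub_apply, sub_sub_cancel] at hsub
  calc gagliardoMeasure μ p (d + d) g {z | dist z.1 z.2 < 2 * t}
      ≤ 2 ^ p * (gagliardoMeasure μ p (d + d) u {z | dist z.1 z.2 < 2 * t} +
          gagliardoMeasure μ p (d + d) (fun x => u x - g x) {z | dist z.1 z.2 < 2 * t}) := hsub _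
    _ ≤ 2 ^ p * (ENNReal.ofReal κ + ENNReal.ofReal κ) := by
        gcongr
        · exact (measure_mono fun z hz => lt_of_lt_of_le hz htδ).trans hδE
        · exact (measure_mono (subset_univ _)).trans hgE
    _ = ENNReal.ofReal K := by
        rw [← ENNReal.ofReal_add hκ.le hκ.le, ← ENNReal.ofReal_ofNat,
          ENNReal.ofReal_rpow_of_pos two_pos, ← ENNReal.ofReal_mul (by positivity),
          ← mul_two, mul_left_comm, div_mul_cancel₀ _ (by positivity)]

end ScaleBound

section TentHomotopy

variable {X : Type*} [PseudoMetricSpace X] [MeasurableSpace X] [OpensMeasurableSpace X]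
  {μ : Measure X}
variable {E : Type*} [NormedAddCommGroup E]

theorem integrable_coe_sphere [SecondCountableTopology X] [IsFiniteMeasure μ]
    {g : X → sphere (0 : E) 1} (hg : Continuous g) : Integrable (fun x => (g x : E)) μ :=
  .of_bound (continuous_subtype_val.comp hg).aestronglyMeasurable 1
    (.of_forall fun x => (norm_eq_of_mem_sphere (g x)).le)

variable [InnerProductSpace ℝ E]

theorem homotopic_tentIntegral_scale {g : X → E} (hg : Integrable g μ) {t₁ t₀ : ℝ}
    (ht₁ : t₁ ∈ Ioc 0 t₀) (h : ∀ t ∈ Ioc 0 t₀, ∀ x, tentIntegral μ g t x ≠ 0) :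
    Homotopic (fun x => (⟨tentIntegral μ g t₁ x, h t₁ ht₁ x⟩ : ({0}ᶜ : Set E)))
      (fun x => ⟨tentIntegral μ g t₀ x, h t₀ ⟨ht₁.1.trans_le ht₁.2, le_rfl⟩ x⟩) := by
  have hmem (r : unitInterval) : AffineMap.lineMap t₁ t₀ (r : ℝ) ∈ Ioc 0 t₀ :=
    (convex_Ioc 0 t₀).lineMap_mem ht₁ ⟨ht₁.1.trans_le ht₁.2, le_rfl⟩ r.2
  refine ⟨fun z => ⟨tentIntegral μ g (AffineMap.lineMap t₁ t₀ (z.1 : ℝ)) z.2,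
    h _ (hmem z.1) z.2⟩, Continuous.subtype_mk ?_ _, fun x => ?_, fun x => ?_⟩
  · refine continuous_tentIntegral_comp hg ?_ continuous_snd fun z => (hmem z.1).1
    simp only [AffineMap.lineMap_apply_module]
    fun_prop
  · simp
  · simp

variable [IsFiniteMeasure μ] [CompleteSpace E]

theorem inner_tentIntegral_pos {g : X → E} (hg : Integrable g μ) {t : ℝ} (ht : 0 < t) {x : X}
    (hmass : 0 < (tentMeasure μ t x).real univ) {v : E}
    (hv : ∀ y ∈ ball x t, 1 / 2 ≤ ⟪v, g y⟫) : 0 < ⟪v, tentIntegral μ g t x⟫ := by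
  have := isFiniteMeasure_tentMeasure (μ := μ) ht x
  have hgt : Integrable g (tentMeasure μ t x) := hg.mono_measure (tentMeasure_le ht x)
  calc 0 < (tentMeasure μ t x).real univ * (1 / 2) := by positivity
    _ = ∫ _, 1 / 2 ∂tentMeasure μ t x := by rw [integral_const, smul_eq_mul]
    _ ≤ ∫ y, ⟪v, g y⟫ ∂tentMeasure μ t x :=
        integral_mono_ae (integrable_const _) (hgt.const_inner v)
          ((ae_tentMeasure_mem_ball ht x).mono hv)
    _ = ⟪v, tentIntegral μ g t x⟫ := integral_inner hgt v

variable [CompactSpace X]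

theorem exists_forall_inner_tentIntegral_pos {d : ℝ} (hμ : IsLowerRegular μ d)
    {g : X → sphere (0 : E) 1} (hg : Continuous g) {t₀ : ℝ} (ht₀ : t₀ ∈ Ioc (0 : ℝ) 1) :
    ∃ t ∈ Ioc 0 t₀, ∀ x, 0 < ⟪(g x : E), tentIntegral μ (fun y => (g y : E)) t x⟫ := by
  obtain ⟨c, hc, hmass⟩ := hμ.exists_le_tentMeasure_real_univ
  obtain ⟨δ, hδ, hgδ⟩ := Metric.uniformContinuous_iff.1
    (CompactSpace.uniformContinuous_of_continuous hg) 1 one_pos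
  have ht : 0 < min t₀ δ := lt_min ht₀.1 hδ
  refine ⟨min t₀ δ, ⟨ht, min_le_left _ _⟩, fun x =>
    inner_tentIntegral_pos (integrable_coe_sphere hg) ht ?_ fun y hy => ?_⟩
  · exact (by positivity : 0 < c * min t₀ δ ^ d).trans_le
      (hmass _ ⟨ht, (min_le_left _ _).trans ht₀.2⟩ x)
  · have hxy : dist x y < δ := (mem_ball'.1 hy).trans_le (min_le_right _ _)
    have hgxy : ‖(g x : E) - g y‖ < 1 := by simpa [Subtype.dist_eq, dist_eq_norm] using hgδ hxy
    rw [real_inner_eq_one_sub_sq_norm_sub_div_two (norm_eq_of_mem_sphere _)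
      (norm_eq_of_mem_sphere _)]
    nlinarith [norm_nonneg ((g x : E) - g y)]

theorem homotopic_sphereToPunctured_tentIntegral {d : ℝ} (hμ : IsLowerRegular μ d)
    {g : X → sphere (0 : E) 1} (hg : Continuous g) {t₀ : ℝ} (ht₀ : t₀ ∈ Ioc (0 : ℝ) 1)
    (h : ∀ t ∈ Ioc 0 t₀, ∀ x, tentIntegral μ (fun y => (g y : E)) t x ≠ 0) :
    Homotopic (sphereToPunctured ∘ g)
      (fun x => (⟨_, h t₀ ⟨ht₀.1, le_rfl⟩ x⟩ : ({0}ᶜ : Set E))) := by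
  obtain ⟨t₁, ht₁, hpos⟩ := exists_forall_inner_tentIntegral_pos hμ hg ht₀
  have hint := integrable_coe_sphere (μ := μ) hg
  refine .trans ?_ (homotopic_tentIntegral_scale hint ht₁ h)
  refine homotopic_of_zero_notMem_segment (continuous_sphereToPunctured.comp hg)
    (.subtype_mk ?_ _) fun x => zero_notMem_segment_of_inner_pos (hpos x)
  exact continuous_tentIntegral_comp hint continuous_const continuous_id fun _ => ht₁.1

theorem homotopic_of_norm_tentIntegral_sub_lt {d : ℝ} (hμ : IsLowerRegular μ d)
    {g₁ g₂ : X → sphere (0 : E) 1} (hg₁ : Continuous g₁) (hg₂ : Continuous g₂) {t₀ : ℝ}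
    (ht₀ : t₀ ∈ Ioc (0 : ℝ) 1)
    (h₁ : ∀ t ∈ Ioc 0 t₀, ∀ x, tentIntegral μ (fun y => (g₁ y : E)) t x ≠ 0)
    (h₂ : ∀ t ∈ Ioc 0 t₀, ∀ x, tentIntegral μ (fun y => (g₂ y : E)) t x ≠ 0)
    (hclose : ∀ x, ‖tentIntegral μ (fun y => (g₂ y : E)) t₀ x -
      tentIntegral μ (fun y => (g₁ y : E)) t₀ x‖ < ‖tentIntegral μ (fun y => (g₁ y : E)) t₀ x‖) :
    Homotopic g₁ g₂ := by
  have hcont {g : X → sphere (0 : E) 1} (hg : Continuous g) :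
      Continuous fun x => tentIntegral μ (fun y => (g y : E)) t₀ x :=
    continuous_tentIntegral_comp (integrable_coe_sphere hg) continuous_const continuous_id
      fun _ => ht₀.1
  have hsegment := homotopic_of_zero_notMem_segment
    ((hcont hg₁).subtype_mk (h₁ t₀ ⟨ht₀.1, le_rfl⟩))
    ((hcont hg₂).subtype_mk (h₂ t₀ ⟨ht₀.1, le_rfl⟩))
    fun x => zero_notMem_segment_of_norm_sub_lt (hclose x)
  exact homotopic_of_homotopic_sphereToPunctured_comp
    ((homotopic_sphereToPunctured_tentIntegral hμ hg₁ ht₀ h₁).trans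
      (hsegment.trans (homotopic_sphereToPunctured_tentIntegral hμ hg₂ ht₀ h₂).symm))

end TentHomotopy

section Stability

variable {X : Type*} [MetricSpace X] [MeasurableSpace X] {μ : Measure X}
variable {E : Type*} [NormedAddCommGroup E]

theorem norm_tentIntegral_sub_le_two_mul [OpensMeasurableSpace X] [NormedSpace ℝ E]
    {u g h : X → E} (hu : AEStronglyMeasurable u μ) (hg : Integrable g μ) (hh : Integrable h μ)
    {ε t : ℝ} (hε : 0 ≤ ε) (ht : 0 < t) (x : X)
    (hug : ∫⁻ y, ENNReal.ofReal ‖u y - g y‖ ∂μ ≤ ENNReal.ofReal ε)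
    (huh : ∫⁻ y, ENNReal.ofReal ‖u y - h y‖ ∂μ ≤ ENNReal.ofReal ε) :
    ‖tentIntegral μ g t x - tentIntegral μ h t x‖ ≤ 2 * ε := by
  simp only [ofReal_norm] at hug huh
  rw [← ENNReal.ofReal_le_ofReal_iff (by positivity), ofReal_norm]
  calc ‖tentIntegral μ g t x - tentIntegral μ h t x‖ₑ
      ≤ ∫⁻ y, ‖g y - h y‖ₑ ∂μ := enorm_tentIntegral_sub_le hg hh ht x
    _ ≤ ∫⁻ y, (‖u y - g y‖ₑ + ‖u y - h y‖ₑ) ∂μ := by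
        refine lintegral_mono fun y => ?_
        rw [← sub_sub_sub_cancel_left, add_comm]
        exact enorm_sub_le
    _ = ∫⁻ y, ‖u y - g y‖ₑ ∂μ + ∫⁻ y, ‖u y - h y‖ₑ ∂μ :=
        lintegral_add_left' (hu.sub hg.aestronglyMeasurable).enorm _
    _ ≤ ENNReal.ofReal ε + ENNReal.ofReal ε := add_le_add hug huh
    _ = ENNReal.ofReal (2 * ε) := by rw [← ENNReal.ofReal_add hε hε, two_mul]

theorem exists_forall_mul_rpow_le_norm_tentIntegral_of_gagliardoSeminorm_lt_top
    [SecondCountableTopology X] [OpensMeasurableSpace X] [IsFiniteMeasure μ]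
    [InnerProductSpace ℝ E] [CompleteSpace E] {d s p : ℝ} (hd : 0 ≤ d) (hp : 0 < p)
    (hsp : s * p = d) (hμ : IsLowerRegular μ d) {u : X → E} (hu : StronglyMeasurable u)
    (huW : gagliardoSeminorm μ d s p u < ⊤) :
    ∃ t₀ ∈ Ioc (0 : ℝ) 1, ∃ c > 0, ∃ ε > 0, ∀ g : X → sphere (0 : E) 1, Continuous g →
      gagliardoSeminorm μ d s p (fun x => u x - g x) ≤ ENNReal.ofReal ε →
      ∀ t ∈ Ioc 0 t₀, ∀ x, c * t ^ d ≤ ‖tentIntegral μ (fun y => (g y : E)) t x‖ := by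
  have huE := gagliardoMeasure_univ_ne_top_of_gagliardoSeminorm_lt_top hu hp huW
  rw [hsp] at huE
  obtain ⟨t₀, ht₀, c, hc, κ, hκ, hlower⟩ :=
    exists_forall_mul_rpow_le_norm_tentIntegral hd hp hμ hu huE
  refine ⟨t₀, ht₀, c, hc, κ ^ (1 / p), by positivity, fun g hg hgW => ?_⟩
  have hgm : StronglyMeasurable fun x => (g x : E) :=
    (continuous_subtype_val.comp hg).stronglyMeasurable
  have hgE := gagliardoMeasure_univ_le_of_gagliardoSeminorm_le (hu.sub hgm) hp hκ hgW
  rw [hsp] at hgE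
  exact hlower _ hgm (fun x => norm_eq_of_mem_sphere (g x)) hgE

end Stability

theorem stmt11_general {X E : Type*} [MetricSpace X] [CompactSpace X] [MeasurableSpace X]
    [OpensMeasurableSpace X] [NormedAddCommGroup E] [InnerProductSpace ℝ E] [CompleteSpace E]
    {μ : Measure X} [IsFiniteMeasure μ] {d s p : ℝ} (hd : 0 ≤ d) (hp : 0 < p) (hsp : s * p = d)
    (hμ : IsLowerRegular μ d) {u : X → E} (hu : StronglyMeasurable u)
    (huW : gagliardoSeminorm μ d s p u < ⊤) :
    ∃ ε : ℝ, 0 < ε ∧ ∀ g₁ g₂ : X → sphere (0 : E) 1, Continuous g₁ → Continuous g₂ →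
      (∫⁻ x, ENNReal.ofReal ‖u x - g₁ x‖ ∂μ) + gagliardoSeminorm μ d s p (fun x => u x - g₁ x) ≤
        ENNReal.ofReal ε →
      (∫⁻ x, ENNReal.ofReal ‖u x - g₂ x‖ ∂μ) + gagliardoSeminorm μ d s p (fun x => u x - g₂ x) ≤
        ENNReal.ofReal ε →
      Homotopic g₁ g₂ := by
  obtain ⟨t₀, ht₀, c, hc, ε, hε, hlower⟩ :=
    exists_forall_mul_rpow_le_norm_tentIntegral_of_gagliardoSeminorm_lt_top hd hp hsp hμ hu huW
  have ht₀0 : 0 < t₀ := ht₀.1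
  refine ⟨min ε (c * t₀ ^ d / 4), by positivity, fun g₁ g₂ hg₁ hg₂ h₁ h₂ => ?_⟩
  have hlower₁ := hlower g₁ hg₁
    ((le_add_self.trans h₁).trans (ENNReal.ofReal_le_ofReal (min_le_left _ _)))
  have hlower₂ := hlower g₂ hg₂
    ((le_add_self.trans h₂).trans (ENNReal.ofReal_le_ofReal (min_le_left _ _)))
  have hpos {t : ℝ} (ht : t ∈ Ioc 0 t₀) : 0 < c * t ^ d :=
    mul_pos hc (Real.rpow_pos_of_pos ht.1 d)
  refine homotopic_of_norm_tentIntegral_sub_lt hμ hg₁ hg₂ ht₀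
    (fun t ht x => norm_pos_iff.1 ((hpos ht).trans_le (hlower₁ t ht x)))
    (fun t ht x => norm_pos_iff.1 ((hpos ht).trans_le (hlower₂ t ht x))) fun x => ?_
  have hclose := norm_tentIntegral_sub_le_two_mul hu.aestronglyMeasurable
    (integrable_coe_sphere hg₂) (integrable_coe_sphere hg₁) (by positivity) ht₀0 x
    (le_self_add.trans h₂) (le_self_add.trans h₁)
  linarith [min_le_right ε (c * t₀ ^ d / 4), hpos ⟨ht₀0, le_rfl⟩, hlower₁ t₀ ⟨ht₀0, le_rfl⟩ x]

/-- continuous maps that are close (in `L¹` and in the `W^{s,n/s}` seminorm)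
to a fixed finite-energy map `u` are all homotopic to each other. -/
theorem stmt11 (n m : ℕ) (hn : 1 ≤ n) (hm : 1 ≤ m) (s : ℝ) (hs : 0 < s) (hs1 : s < 1)
    (u : Sph n → Sph m) (hu : Measurable u)
    (huW : sphGagliardo n m s ((n : ℝ) / s)
      (fun x => (u x : EuclideanSpace ℝ (Fin (m + 1)))) < ⊤) :
    ∃ ε : ℝ, 0 < ε ∧
      ∀ g₁ g₂ : Sph n → Sph m, Continuous g₁ → Continuous g₂ →
        ((∫⁻ x, ENNReal.ofReal
              ‖(u x : EuclideanSpace ℝ (Fin (m + 1))) - (g₁ x : EuclideanSpace ℝ (Fin (m + 1)))‖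
              ∂(μH[(n : ℝ)] : Measure (Sph n)))
          + sphGagliardo n m s ((n : ℝ) / s)
              (fun x => (u x : EuclideanSpace ℝ (Fin (m + 1)))
                - (g₁ x : EuclideanSpace ℝ (Fin (m + 1))))
          ≤ ENNReal.ofReal ε) →
        ((∫⁻ x, ENNReal.ofReal
              ‖(u x : EuclideanSpace ℝ (Fin (m + 1))) - (g₂ x : EuclideanSpace ℝ (Fin (m + 1)))‖
              ∂(μH[(n : ℝ)] : Measure (Sph n)))
          + sphGagliardo n m s ((n : ℝ) / s)
              (fun x => (u x : EuclideanSpace ℝ (Fin (m + 1)))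
                - (g₂ x : EuclideanSpace ℝ (Fin (m + 1))))
          ≤ ENNReal.ofReal ε) →
        Homotopic g₁ g₂ := by
  have hE := finrank_euclideanSpace_fin (𝕜 := ℝ) (n := n + 1)
  have := isFiniteMeasure_hausdorffMeasure_sphere hE
  exact stmt11_general n.cast_nonneg (by positivity) (mul_div_cancel₀ _ hs.ne')
    (isLowerRegular_hausdorffMeasure_sphere hE) hu.subtype_val.stronglyMeasurable huW
end
end
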